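/- arXiv:2508.21799 — 3 statements merged into one kernel-verified Lean document; each statement's English description precedes it below -/
import Mathlib

section
/- Let h and d be positive integers with h ≤ d + 2, and let C_{h,d} denote the finite cyclic semigroup ⟨a | a^h = a^{h+d}⟩. A non-balanced identity u = v holds in C_{h,d} if and only if it is d-balanced and long, i.e. occ(x,u) ≡ occ(x,v) (mod d) for every letter x, and |u| ≥ h and |v| ≥ h. -/
/-! Under the substitution `x ↦ a ^ e x`, a word `w` takes the value `a ^ (∑ e x * occ x w)`
(`lift_val`), and `a ^ m = a ^ n` exactly when `m = n`, or `m, n ≥ h` and `m ≡ n [MOD d]`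
(`cycReduce_eq_iff`). So an identity holds iff the two exponents are so related for every choice
of `e`, and three kinds of test weights suffice for necessity: all weights `1`; one letter of
weight `2` and the others of weight `1`; one letter of weight `1` and the others of weight `2`.

The first two give `d`-balance. If moreover one word is shorter than `h`, then both have the same
length `n < h`; say `occ x v < occ x u`, so that `occ x v + d ≤ occ x u`. The second kind of weight
gives unequal exponents, hence `n + occ x v ≥ h > n` and `occ x v ≥ 1`; the third likewise gives
`2 * n - occ x u ≥ h > n`, that is `occ x u < n`. Therefore `d + 1 ≤ occ x u ≤ n - 1 ≤ h - 2`,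
against `h ≤ d + 2`. -/

/-- Words over the countably infinite alphabet `ℕ`: elements of the free semigroup. -/
abbrev Word : Type := FreeSemigroup ℕ

/-- The list of letters of a word. -/
def Word.toList (w : Word) : List ℕ := w.head :: w.tail

/-- `occ x w`: the number of occurrences of the letter `x` in the word `w`. -/
def occ (x : ℕ) (w : Word) : ℕ := w.toList.count x

/-- `wlen w`: the length of the word `w`. -/
def wlen (w : Word) : ℕ := w.toList.length

/-- `con w`: the content of `w`, i.e. the set of letters occurring in `w`. -/
def con (w : Word) : Set ℕ := {x | x ∈ w.toList}

/-- A semigroup `S` satisfies the identity `u = v` if every substitution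
`φ : ℕ → S` gives both words equal values. -/
def SatisfiesId (S : Type*) [Semigroup S] (u v : Word) : Prop :=
  ∀ φ : ℕ → S, FreeSemigroup.lift φ u = FreeSemigroup.lift φ v

/-- Reduction of exponents in the cyclic semigroup `⟨a ∣ a^h = a^{h+d}⟩`:
`reduce h d e` is the unique `k` with `a^k = a^e`, `1 ≤ k ≤ h + d - 1` (for `e ≥ 1`). -/
def cycReduce (h d e : ℕ) : ℕ := if e < h then e else h + (e - h) % d

/-- The carrier of the finite cyclic semigroup `C_{h,d}`:
the elements `a, a², …, a^{h+d-1}`, encoded by their exponents. -/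
def Cyc (h d : ℕ) : Type := {n : ℕ // 1 ≤ n ∧ n ≤ h + d - 1}

theorem cycReduce_add_left (h d a b : ℕ) :
    cycReduce h d (cycReduce h d a + b) = cycReduce h d (a + b) := by
  unfold cycReduce
  by_cases h1 : a < h
  · simp [h1]
  · rw [if_neg h1, if_neg (by omega : ¬ h + (a - h) % d + b < h),
      if_neg (by omega : ¬ a + b < h)]
    have e1 : h + (a - h) % d + b - h = (a - h) % d + b := by omega
    rw [e1, Nat.mod_add_mod]
    have e2 : a - h + b = a + b - h := by omega
    rw [e2]

/-- `C_{h,d}` is a semigroup: `a^i · a^j = a^{i+j}` if `i + j ≤ h + d - 1`, and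
`a^i · a^j = a^k` with `h ≤ k ≤ h + d - 1`, `k ≡ i + j (mod d)` otherwise. -/
instance Cyc.instSemigroup (h d : ℕ) [Fact (0 < h)] [Fact (0 < d)] : Semigroup (Cyc h d) where
  mul a b := ⟨cycReduce h d (a.1 + b.1), by
    have hh : 0 < h := Fact.out
    have hd : 0 < d := Fact.out
    have ha := a.2; have hb := b.2
    unfold cycReduce
    split_ifs with h1
    · omega
    · have : (a.1 + b.1 - h) % d < d := Nat.mod_lt _ hd
      omega⟩
  mul_assoc a b c := by
    apply Subtype.ext
    show cycReduce h d (cycReduce h d (a.1 + b.1) + c.1)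
        = cycReduce h d (a.1 + cycReduce h d (b.1 + c.1))
    rw [cycReduce_add_left]
    conv_rhs => rw [Nat.add_comm a.1, cycReduce_add_left, Nat.add_comm]
    rw [Nat.add_assoc]

instance : Fact (0 < 1) := ⟨Nat.one_pos⟩

/-- The identity `u = v` is balanced: every letter occurs equally often in `u` and `v`. -/
def BalancedId (u v : Word) : Prop := ∀ x : ℕ, occ x u = occ x v

/-- The identity `u = v` is `d`-balanced: `occ(x,u) ≡ occ(x,v) (mod d)` for every letter. -/
def DBalanced (d : ℕ) (u v : Word) : Prop := ∀ x : ℕ, occ x u ≡ occ x v [MOD d]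

/-- The identity `u = v` is long with respect to `h`: `|u| ≥ h` and `|v| ≥ h`. -/
def LongId (h : ℕ) (u v : Word) : Prop := h ≤ wlen u ∧ h ≤ wlen v

/-- The exponent of the value of `w` under the substitution `x ↦ a ^ e x`, before reduction. -/
def weight (e : ℕ → ℕ) (w : Word) : ℕ := (w.toList.map e).sum

theorem weight_mul (e : ℕ → ℕ) (u v : Word) : weight e (u * v) = weight e u + weight e v := by
  simp [weight, Word.toList, add_assoc]

theorem cycReduce_eq_iff {h d : ℕ} (m n : ℕ) :
    cycReduce h d m = cycReduce h d n ↔ m = n ∨ (h ≤ m ∧ h ≤ n ∧ m ≡ n [MOD d]) := by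
  unfold cycReduce
  split_ifs with h1 h2 h2
  · omega
  · omega
  · omega
  · have key : (m - h) % d = (n - h) % d ↔ m ≡ n [MOD d] := by
      constructor
      · intro H
        have := Nat.ModEq.add_right h (show m - h ≡ n - h [MOD d] from H)
        rwa [Nat.sub_add_cancel (by omega), Nat.sub_add_cancel (by omega)] at this
      · intro H
        apply Nat.ModEq.add_right_cancel' h
        rwa [Nat.sub_add_cancel (by omega), Nat.sub_add_cancel (by omega)]
    rw [Nat.add_left_cancel_iff, key]
    constructor
    · intro H
      exact Or.inr ⟨by omega, by omega, H⟩
    · rintro (rfl | ⟨-, -, H⟩)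
      · rfl
      · exact H

theorem cycReduce_of_le {h d n : ℕ} (hn : n ≤ h + d - 1) (hd : 0 < d) : cycReduce h d n = n := by
  unfold cycReduce
  split_ifs with h1
  · rfl
  · rw [Nat.mod_eq_of_lt (by omega)]
    omega

theorem cycReduce_mem {h d n : ℕ} (hh : 0 < h) (hd : 0 < d) (hn : 1 ≤ n) :
    1 ≤ cycReduce h d n ∧ cycReduce h d n ≤ h + d - 1 := by
  unfold cycReduce
  split_ifs with h1
  · omega
  · have := Nat.mod_lt (n - h) hd
    omega

theorem lift_val {h d : ℕ} [Fact (0 < h)] [Fact (0 < d)] (φ : ℕ → Cyc h d) (e : ℕ → ℕ)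
    (hφ : ∀ x, (φ x).1 = cycReduce h d (e x)) (w : Word) :
    (FreeSemigroup.lift φ w).1 = cycReduce h d (weight e w) := by
  induction w using FreeSemigroup.recOnMul with
  | ih1 x =>
    rw [FreeSemigroup.lift_of, hφ]
    simp [weight, Word.toList, FreeSemigroup.of]
  | ih2 x y hx hy =>
    rw [map_mul, weight_mul]
    change cycReduce h d ((FreeSemigroup.lift φ _).1 + (FreeSemigroup.lift φ y).1) = _
    rw [hx, hy, cycReduce_add_left, add_comm, cycReduce_add_left, add_comm]

/-- An identity holds in `C_{h,d}` iff the two sides have equal values under all substitutions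
`x ↦ a ^ e x` with positive exponents `e x`, which need not be reduced. -/
theorem satisfiesId_iff {h d : ℕ} [Fact (0 < h)] [Fact (0 < d)] (u v : Word) :
    SatisfiesId (Cyc h d) u v ↔ ∀ e : ℕ → ℕ, (∀ x, 1 ≤ e x) →
      weight e u = weight e v ∨
        (h ≤ weight e u ∧ h ≤ weight e v ∧ weight e u ≡ weight e v [MOD d]) := by
  have hh : 0 < h := Fact.out
  have hd : 0 < d := Fact.out
  constructor
  · intro H e he
    rw [← cycReduce_eq_iff]
    let φ : ℕ → Cyc h d := fun x => ⟨cycReduce h d (e x), cycReduce_mem hh hd (he x)⟩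
    rw [← lift_val φ e (fun _ => rfl), ← lift_val φ e (fun _ => rfl), H φ]
  · intro H φ
    have hφ : ∀ x, (φ x).1 = cycReduce h d (φ x).1 := fun x => (cycReduce_of_le (φ x).2.2 hd).symm
    apply Subtype.ext
    rw [lift_val φ _ hφ, lift_val φ _ hφ, cycReduce_eq_iff]
    exact H _ fun x => (φ x).2.1

theorem wlen_le_weight (e : ℕ → ℕ) (he : ∀ x, 1 ≤ e x) (w : Word) : wlen w ≤ weight e w := by
  unfold wlen weight
  induction w.toList with
  | nil => simp
  | cons a l ih =>
    have := he a
    simp only [List.length_cons, List.map_cons, List.sum_cons]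
    omega

theorem weight_one (w : Word) : weight (fun _ => 1) w = wlen w := by
  simp [weight, wlen]

theorem weight_single (x : ℕ) (w : Word) :
    weight (fun y => if y = x then 2 else 1) w = wlen w + occ x w := by
  unfold weight wlen occ
  induction w.toList with
  | nil => simp
  | cons a l ih =>
    by_cases hax : a = x <;> simp [hax, ih] <;> omega

theorem weight_others (x : ℕ) (w : Word) :
    weight (fun y => if y = x then 1 else 2) w + occ x w = 2 * wlen w := by
  unfold weight wlen occ
  induction w.toList with
  | nil => simp
  | cons a l ih =>
    by_cases hax : a = x <;> simp [hax] <;> omega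

theorem weight_modEq {d : ℕ} {u v : Word} (H : DBalanced d u v) (e : ℕ → ℕ) :
    weight e u ≡ weight e v [MOD d] := by
  have key : ∀ w : Word, ∀ s : Finset ℕ, w.toList.toFinset ⊆ s →
      weight e w = ∑ x ∈ s, occ x w * e x := by
    intro w s hs
    rw [weight, Finset.sum_list_map_count]
    simp only [smul_eq_mul]
    apply Finset.sum_subset hs
    intro x _ hx
    rw [List.count_eq_zero_of_not_mem (by simpa using hx), zero_mul]
  rw [key u _ Finset.subset_union_left, key v _ Finset.subset_union_right]
  exact Nat.ModEq.sum fun x _ => (H x).mul_right _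

/-- The asymmetric half of the length bound, for a letter occurring more often in `u`. -/
theorem not_short {h d : ℕ} [Fact (0 < h)] [Fact (0 < d)] (hhd : h ≤ d + 2) {u v : Word}
    (H : SatisfiesId (Cyc h d) u v) (hb : DBalanced d u v) {x : ℕ} (hx : occ x v < occ x u)
    (hlen : wlen u = wlen v) : h ≤ wlen u := by
  rw [satisfiesId_iff] at H
  have h1 := H (fun y => if y = x then 2 else 1) (fun y => by split_ifs <;> omega)
  have h2 := H (fun y => if y = x then 1 else 2) (fun y => by split_ifs <;> omega)
  rw [weight_single, weight_single] at h1
  have hu := weight_others x u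
  have hv := weight_others x v
  have hdiff : d ≤ occ x u - occ x v :=
    Nat.le_of_dvd (by omega) ((Nat.modEq_iff_dvd' hx.le).1 (hb x).symm)
  have h1' : h ≤ wlen v + occ x v := by
    rcases h1 with h1 | h1
    · omega
    · exact h1.2.1
  have h2' : h ≤ weight (fun y => if y = x then 1 else 2) u := by
    rcases h2 with h2 | h2
    · omega
    · exact h2.1
  omega

/-- For `h ≤ d + 2`, a non-balanced identity `u = v` holds in the finite cyclic semigroup
`C_{h,d} = ⟨a ∣ a^h = a^{h+d}⟩` if and only if it is `d`-balanced and long. -/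
theorem identities_of_cyclic_semigroup_small_index (h d : ℕ) [Fact (0 < h)] [Fact (0 < d)]
    (hhd : h ≤ d + 2) (u v : Word) (hnb : ¬ BalancedId u v) :
    SatisfiesId (Cyc h d) u v ↔ DBalanced d u v ∧ LongId h u v := by
  constructor
  · intro H
    have Hw := (satisfiesId_iff u v).1 H
    have h0 := Hw (fun _ => 1) (fun _ => le_rfl)
    rw [weight_one, weight_one] at h0
    have hlen : wlen u ≡ wlen v [MOD d] := by
      rcases h0 with h0 | h0
      · rw [h0]
      · exact h0.2.2
    have hb : DBalanced d u v := by
      intro x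
      have h1 := Hw (fun y => if y = x then 2 else 1) (fun y => by split_ifs <;> omega)
      rw [weight_single, weight_single] at h1
      refine Nat.ModEq.add_left_cancel hlen ?_
      rcases h1 with h1 | h1
      · rw [h1]
      · exact h1.2.2
    refine ⟨hb, ?_⟩
    rcases h0 with h0 | h0
    · obtain ⟨x, hx⟩ := not_forall.1 hnb
      rcases lt_or_gt_of_ne hx with hx | hx
      · have := not_short hhd (fun φ => (H φ).symm) (fun y => (hb y).symm) hx h0.symm
        exact ⟨h0 ▸ this, this⟩
      · have := not_short hhd H hb hx h0
        exact ⟨this, h0 ▸ this⟩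
    · exact ⟨h0.1, h0.2.1⟩
  · rintro ⟨hb, hu, hv⟩
    rw [satisfiesId_iff]
    intro e he
    exact Or.inr ⟨hu.trans (wlen_le_weight e he u), hv.trans (wlen_le_weight e he v),
      weight_modEq hb e⟩
end

section
/- Let h and d be positive integers with h > d + 2, and let r be an integer with 1 ≤ r ≤ ⌊(h−d)/3⌋. The finite cyclic semigroup C_{h,d} = ⟨a | a^h = a^{h+d}⟩ satisfies the identity Ψ_{h,d,r}: x^r y^{r+d} x_1 ⋯ x_{h−3r−d} = x^{r+d} y^r x_1 ⋯ x_{h−3r−d}, where x, y, x_1, …, x_{h−3r−d} are distinct letters (the tail x_1 ⋯ x_{h−3r−d} is empty when h − 3r − d = 0). -/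
/-- Left-hand side `x^r y^{r+d} x₁ ⋯ x_{h-3r-d}` of the identity `Ψ_{h,d,r}`,
with the distinct letters `x := 0`, `y := 1`, `xᵢ := i + 1`. -/
def psiLHS (h d r : ℕ) : Word :=
  ⟨0, List.replicate (r - 1) 0 ++ List.replicate (r + d) 1
      ++ (List.range (h - 3 * r - d)).map (· + 2)⟩

/-- Right-hand side `x^{r+d} y^r x₁ ⋯ x_{h-3r-d}` of the identity `Ψ_{h,d,r}`. -/
def psiRHS (h d r : ℕ) : Word :=
  ⟨0, List.replicate (r + d - 1) 0 ++ List.replicate r 1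
      ++ (List.range (h - 3 * r - d)).map (· + 2)⟩

/-- Two exponents past the index `h` that agree modulo the period name the same power of `a`. -/
theorem cycReduce_eq_of_modEq {h d m n : ℕ} (hm : h ≤ m) (hn : h ≤ n) (hmn : m ≡ n [MOD d]) :
    cycReduce h d m = cycReduce h d n := by
  unfold cycReduce
  rw [if_neg (by omega), if_neg (by omega)]
  congr 1
  apply Nat.ModEq.add_right_cancel' h
  rwa [Nat.sub_add_cancel hm, Nat.sub_add_cancel hn]

/-- Exponents in the normal range `[1, h + d - 1]` are already reduced. -/
theorem cycReduce_of_mem {h d : ℕ} (a : Cyc h d) : cycReduce h d a.1 = a.1 := by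
  have ha := a.2
  unfold cycReduce
  split_ifs with h1
  · rfl
  · rw [Nat.mod_eq_of_lt (by omega)]
    omega

theorem foldl_val {h d : ℕ} [Fact (0 < h)] [Fact (0 < d)] (φ : ℕ → Cyc h d) (l : List ℕ)
    (a : Cyc h d) :
    (l.foldl (fun s i => s * φ i) a).1 = cycReduce h d (a.1 + (l.map fun i => (φ i).1).sum) := by
  induction l generalizing a with
  | nil => simp [cycReduce_of_mem]
  | cons i l ih =>
    rw [List.foldl_cons, ih, List.map_cons, List.sum_cons, ← Nat.add_assoc]
    exact cycReduce_add_left h d _ _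

/-- The value of a word under a substitution is the reduction of the sum of the exponents
substituted for its letters. -/
theorem lift_val_s9 {h d : ℕ} [Fact (0 < h)] [Fact (0 < d)] (φ : ℕ → Cyc h d) (w : Word) :
    (FreeSemigroup.lift φ w).1 = cycReduce h d ((φ w.head).1 + (w.tail.map fun i => (φ i).1).sum) :=
  foldl_val φ w.tail (φ w.head)

/-- For `h > d + 2` and `1 ≤ r ≤ ⌊(h-d)/3⌋`, the finite cyclic semigroup
`C_{h,d} = ⟨a ∣ a^h = a^{h+d}⟩` satisfies the identity
`Ψ_{h,d,r} : x^r y^{r+d} x₁ ⋯ x_{h-3r-d} = x^{r+d} y^r x₁ ⋯ x_{h-3r-d}`. -/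
theorem cyclic_satisfies_psi (h d r : ℕ) [Fact (0 < h)] [Fact (0 < d)]
    (hhd : d + 2 < h) (hr1 : 1 ≤ r) (hr2 : r ≤ (h - d) / 3) :
    SatisfiesId (Cyc h d) (psiLHS h d r) (psiRHS h d r) := by
  intro φ
  apply Subtype.ext
  rw [lift_val_s9, lift_val_s9]
  have hT : h - 3 * r - d ≤
      (((List.range (h - 3 * r - d)).map (· + 2)).map fun i => (φ i).1).sum := by
    have hle := List.length_le_sum_of_one_le
      (((List.range (h - 3 * r - d)).map (· + 2)).map fun i => (φ i).1) (by
        intro n hn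
        obtain ⟨i, -, rfl⟩ := List.mem_map.1 hn
        exact (φ i).2.1)
    simpa using hle
  simp only [psiLHS, psiRHS, List.map_append, List.sum_append, List.map_replicate,
    List.sum_replicate, smul_eq_mul]
  generalize (((List.range (h - 3 * r - d)).map (· + 2)).map fun i => (φ i).1).sum = T at hT ⊢
  have hp := (φ 0).2.1
  have hq := (φ 1).2.1
  generalize (φ 0).1 = p at hp ⊢
  generalize (φ 1).1 = q at hq ⊢
  obtain ⟨k, rfl⟩ : ∃ k, r = k + 1 := ⟨r - 1, by omega⟩
  have eL : p + ((k + 1 - 1) * p + (k + 1 + d) * q + T)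
      = (k + 1) * (p + q) + T + d * q := by
    rw [Nat.add_sub_cancel]; ring
  have eR : p + ((k + 1 + d - 1) * p + (k + 1) * q + T)
      = (k + 1) * (p + q) + T + d * p := by
    rw [show k + 1 + d - 1 = k + d by omega]; ring
  rw [eL, eR]
  rcases eq_or_ne p q with rfl | hpq
  · rfl
  -- Distinct positive exponents satisfy `p + q ≥ 3`.
  have h3 : (k + 1) * 3 ≤ (k + 1) * (p + q) := Nat.mul_le_mul_left _ (by omega)
  have hdp : d ≤ d * p := Nat.le_mul_of_pos_right d hp
  have hdq : d ≤ d * q := Nat.le_mul_of_pos_right d hq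
  apply cycReduce_eq_of_modEq (by omega) (by omega)
  simp [Nat.ModEq]
end

section
/- Let h and d be positive integers with h ≤ d + 2. The system consisting of the commutative law xy = yx and the identity Φ_{h,d}: x^d x_1 ⋯ x_h = x_1 ⋯ x_h (with x, x_1, …, x_h distinct letters) is an identity basis for the finite cyclic semigroup C_{h,d} = ⟨a | a^h = a^{h+d}⟩. That is: C_{h,d} satisfies both identities of the system, and every identity u = v satisfied by C_{h,d} is satisfied by every semigroup that satisfies both identities of the system. -/
/-- Left-hand side `xy` of the commutative law, with `x := 0`, `y := 1`. -/
def commLHS : Word := ⟨0, [1]⟩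

/-- Right-hand side `yx` of the commutative law, with `x := 0`, `y := 1`. -/
def commRHS : Word := ⟨1, [0]⟩

/-- Left-hand side `x^d x₁ ⋯ x_h` of the identity `Φ_{h,d}`,
with the distinct letters `x := 0`, `xᵢ := i` for `i = 1, …, h`. -/
def phiLHS (h d : ℕ) : Word := ⟨0, List.replicate (d - 1) 0 ++ (List.range h).map (· + 1)⟩

/-- Right-hand side `x₁ ⋯ x_h` of the identity `Φ_{h,d}`, with `xᵢ := i`. -/
def phiRHS (h : ℕ) : Word := ⟨1, (List.range (h - 1)).map (· + 2)⟩

/-! ### Words as lists of letters -/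

theorem toList_of (x : ℕ) : Word.toList (FreeSemigroup.of x) = [x] := rfl

theorem toList_mul (u v : Word) : (u * v).toList = u.toList ++ v.toList := by
  simp [Word.toList]

theorem toList_phiLHS (h d : ℕ) (hd : 0 < d) :
    (phiLHS h d).toList = List.replicate d 0 ++ (List.range h).map (· + 1) := by
  obtain ⟨k, rfl⟩ := Nat.exists_eq_succ_of_ne_zero hd.ne'
  simp [phiLHS, Word.toList, List.replicate_succ]

theorem toList_phiRHS (h : ℕ) (hh : 0 < h) :
    (phiRHS h).toList = (List.range h).map (· + 1) := by
  obtain ⟨k, rfl⟩ := Nat.exists_eq_succ_of_ne_zero hh.ne'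
  simp [phiRHS, Word.toList, List.range_succ_eq_map, Function.comp_def]

theorem coe_lift {S : Type*} [CommSemigroup S] (φ : ℕ → S) (w : Word) :
    ((FreeSemigroup.lift φ w : S) : WithOne S)
      = (w.toList.map fun x => (φ x : WithOne S)).prod := by
  induction w using FreeSemigroup.recOnMul with
  | ih1 x => simp [toList_of]
  | ih2 x y hx hy => rw [toList_mul, map_mul, WithOne.coe_mul, hx, hy, List.map_append,
      List.prod_append]

/-! ### The cyclic semigroup -/

section Cyclic

variable {h d : ℕ}

theorem cycReduce_add_right (a b : ℕ) :
    cycReduce h d (a + cycReduce h d b) = cycReduce h d (a + b) := by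
  rw [Nat.add_comm, cycReduce_add_left, Nat.add_comm]

theorem cycReduce_of_lt {a : ℕ} (ha : a < h) : cycReduce h d a = a := by
  simp [cycReduce, ha]

theorem cycReduce_eq_of_lt {a b : ℕ} (ha : a < h) (e : cycReduce h d a = cycReduce h d b) :
    a = b := by
  unfold cycReduce at e
  split_ifs at e <;> omega

theorem modEq_of_cycReduce_eq {a b : ℕ} (e : cycReduce h d a = cycReduce h d b) :
    a ≡ b [MOD d] := by
  unfold cycReduce at e
  split_ifs at e with h1 h2 h2
  · rw [e]
  · omega
  · omega
  · have h3 : a - h ≡ b - h [MOD d] := Nat.add_left_cancel e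
    have h4 := h3.add_right h
    rwa [Nat.sub_add_cancel (not_lt.1 h1), Nat.sub_add_cancel (not_lt.1 h2)] at h4

theorem cycReduce_bounds (hh : 0 < h) (hd : 0 < d) {a : ℕ} (ha : 1 ≤ a) :
    1 ≤ cycReduce h d a ∧ cycReduce h d a ≤ h + d - 1 := by
  have := Nat.mod_lt (a - h) hd
  unfold cycReduce
  split_ifs <;> omega

theorem Cyc.cycReduce_val (a : Cyc h d) : cycReduce h d a.1 = a.1 := by
  have := a.2
  unfold cycReduce
  split_ifs with h1
  · rfl
  · rw [Nat.mod_eq_of_lt] <;> omega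

theorem cycReduce_sum_map (e : ℕ → ℕ) (l : List ℕ) :
    cycReduce h d (l.map fun x => cycReduce h d (e x)).sum = cycReduce h d (l.map e).sum := by
  induction l with
  | nil => rfl
  | cons x l ih =>
    simp only [List.map_cons, List.sum_cons]
    rw [cycReduce_add_left, ← cycReduce_add_right, ih, cycReduce_add_right]

theorem sum_map_double (x : ℕ) (l : List ℕ) :
    (l.map fun y => if y = x then 2 else 1).sum = l.length + l.count x := by
  induction l with
  | nil => rfl
  | cons y l ih =>
    simp only [List.map_cons, List.sum_cons, ih, List.length_cons, List.count_cons, beq_iff_eq]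
    split_ifs <;> omega

variable [Fact (0 < h)] [Fact (0 < d)]

theorem Cyc.val_mul (a b : Cyc h d) : (a * b).1 = cycReduce h d (a.1 + b.1) := rfl

theorem Cyc.val_lift (φ : ℕ → Cyc h d) (w : Word) :
    (FreeSemigroup.lift φ w).1 = cycReduce h d (w.toList.map fun x => (φ x).1).sum := by
  induction w using FreeSemigroup.recOnMul with
  | ih1 x => simp [toList_of, Cyc.cycReduce_val]
  | ih2 x y hx hy =>
    rw [toList_mul, map_mul, Cyc.val_mul, hx, hy, List.map_append, List.sum_append,
      cycReduce_add_left, cycReduce_add_right]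

/-- An identity of `C_{h,d}`, evaluated at `x ↦ a^(e x)` for arbitrary positive exponents. -/
theorem SatisfiesId.cycReduce_eq {u v : Word} (H : SatisfiesId (Cyc h d) u v)
    (e : ℕ → ℕ) (he : ∀ x, 1 ≤ e x) :
    cycReduce h d (u.toList.map e).sum = cycReduce h d (v.toList.map e).sum := by
  have hh : 0 < h := Fact.out
  have hd : 0 < d := Fact.out
  obtain ⟨φ, hφ⟩ : ∃ φ : ℕ → Cyc h d, ∀ x, (φ x).1 = cycReduce h d (e x) :=
    ⟨fun x => ⟨_, cycReduce_bounds hh hd (he x)⟩, fun _ => rfl⟩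
  have key (w : Word) : (FreeSemigroup.lift φ w).1 = cycReduce h d (w.toList.map e).sum := by
    rw [Cyc.val_lift]
    simp only [hφ, cycReduce_sum_map]
  rw [← key, ← key, H φ]

theorem cyc_length {u v : Word} (H : SatisfiesId (Cyc h d) u v) :
    cycReduce h d u.toList.length = cycReduce h d v.toList.length := by
  simpa using H.cycReduce_eq (fun _ => 1) fun _ => le_rfl

theorem cyc_length_add_count {u v : Word} (H : SatisfiesId (Cyc h d) u v) (x : ℕ) :
    cycReduce h d (u.toList.length + u.toList.count x)
      = cycReduce h d (v.toList.length + v.toList.count x) := by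
  have := H.cycReduce_eq (fun y => if y = x then 2 else 1) fun y => by split_ifs <;> omega
  rwa [sum_map_double, sum_map_double] at this

theorem cyc_count_modEq {u v : Word} (H : SatisfiesId (Cyc h d) u v) (x : ℕ) :
    u.toList.count x ≡ v.toList.count x [MOD d] :=
  Nat.ModEq.add_left_cancel (modEq_of_cycReduce_eq (cyc_length H))
    (modEq_of_cycReduce_eq (cyc_length_add_count H x))

theorem cyc_satisfies_comm : SatisfiesId (Cyc h d) commLHS commRHS := by
  intro φ
  apply Subtype.ext
  rw [Cyc.val_lift, Cyc.val_lift]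
  simp [commLHS, commRHS, Word.toList, Nat.add_comm]

theorem cyc_satisfies_phi : SatisfiesId (Cyc h d) (phiLHS h d) (phiRHS h) := by
  have hh : 0 < h := Fact.out
  have hd : 0 < d := Fact.out
  intro φ
  apply Subtype.ext
  rw [Cyc.val_lift, Cyc.val_lift, toList_phiLHS h d hd, toList_phiRHS h hh, List.map_append,
    List.sum_append]
  have key : h ≤ (((List.range h).map (· + 1)).map fun x => (φ x).1).sum := by
    have := List.length_le_sum_of_one_le (((List.range h).map (· + 1)).map fun x => (φ x).1)
      (by
        intro i hi
        obtain ⟨x, -, rfl⟩ := List.mem_map.1 hi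
        exact (φ x).2.1)
    simpa using this
  generalize (((List.range h).map (· + 1)).map fun x => (φ x).1).sum = s at key
  simp only [List.map_replicate, List.sum_replicate, smul_eq_mul]
  unfold cycReduce
  rw [if_neg (by omega), if_neg (by omega), Nat.add_sub_assoc key, Nat.mul_add_mod]

end Cyclic

/-! ### Short words -/

/-- For equal lengths at most `d + 1`, letter counts that are congruent mod `d` and vanish
simultaneously coincide. -/
theorem count_eq_of_short {d : ℕ} {l l' : List ℕ} (hlen : l.length = l'.length)
    (hle : l.length ≤ d + 1) (hmod : ∀ x, l.count x ≡ l'.count x [MOD d])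
    (hzero : ∀ x, l.count x = 0 ↔ l'.count x = 0) (x : ℕ) : l.count x = l'.count x := by
  wlog hlt : l.count x < l'.count x generalizing l l'
  · rcases lt_trichotomy (l.count x) (l'.count x) with h | h | h
    · exact absurd h hlt
    · exact h
    · exact (this hlen.symm (hlen ▸ hle) (fun x => (hmod x).symm) (fun x => (hzero x).symm) h).symm
  exfalso
  have hpos : l.count x ≠ 0 := fun h0 => by have := (hzero x).1 h0; omega
  have hle' : l'.count x ≤ l'.length := List.count_le_length
  have hdvd := (Nat.modEq_iff_dvd' hlt.le).1 (hmod x)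
  have := Nat.le_of_dvd (by omega) hdvd
  -- Thus `l'` consists of copies of `x` only, and hence so does `l`.
  have hall' : ∀ b ∈ l', x = b := List.count_eq_length.1 (by omega)
  have hall : ∀ b ∈ l, x = b := by
    intro b hb
    apply hall'
    rw [← List.count_pos_iff] at hb ⊢
    have := hzero b
    omega
  have := List.count_eq_length.2 hall
  omega

theorem cyc_perm_of_short {h d : ℕ} [Fact (0 < h)] [Fact (0 < d)] (hhd : h ≤ d + 2)
    {u v : Word} (H : SatisfiesId (Cyc h d) u v) (hu : u.toList.length < h) :
    u.toList.Perm v.toList := by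
  have hlen := cycReduce_eq_of_lt hu (cyc_length H)
  refine List.perm_iff_count.2 (count_eq_of_short hlen (by omega) (cyc_count_modEq H) fun x => ?_)
  have e := cyc_length_add_count H x
  constructor
  · intro h0
    have := cycReduce_eq_of_lt (by omega) e
    omega
  · intro h0
    have := cycReduce_eq_of_lt (by omega) e.symm
    omega

/-! ### Long words -/

/-- A product of at least `h` factors from `S` absorbs every `d`-th power: apply `Φ_{h,d}` to the
first `h` factors. -/
theorem pow_mul_prod {h d : ℕ} (hh : 0 < h) (hd : 0 < d) {S : Type*} [CommSemigroup S]
    (H : SatisfiesId S (phiLHS h d) (phiRHS h)) (f : ℕ → S) (a : S) (l : List ℕ)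
    (hl : h ≤ l.length) :
    (a : WithOne S) ^ d * (l.map fun x => (f x : WithOne S)).prod
      = (l.map fun x => (f x : WithOne S)).prod := by
  have e := congrArg (fun s : S => (s : WithOne S))
    (H fun i => if i = 0 then a else f (l.getD (i - 1) 0))
  simp only [coe_lift, toList_phiLHS h d hd, toList_phiRHS h hh, List.map_append,
    List.prod_append, List.map_replicate, List.prod_replicate, if_true, List.map_map] at e
  have e2 : (List.range h).map ((fun x => ((if x = 0 then a else f (l.getD (x - 1) 0) : S) :
      WithOne S)) ∘ (· + 1)) = (l.take h).map fun x => (f x : WithOne S) := by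
    apply List.ext_getElem
    · simp [hl]
    · intro i h1 h2
      have : i < l.length := by simp at h1; omega
      simp [List.getElem?_eq_getElem this]
  rw [e2] at e
  conv_lhs => rw [← List.take_append_drop h l, List.map_append, List.prod_append, ← mul_assoc, e]
  rw [← List.prod_append, ← List.map_append, List.take_append_drop]

theorem prod_mul_prod_pow {h d : ℕ} (hh : 0 < h) (hd : 0 < d) {S : Type*} [CommSemigroup S]
    (H : SatisfiesId S (phiLHS h d) (phiRHS h)) (f : ℕ → S) (l : List ℕ)
    (hl : h ≤ l.length) (s : Finset ℕ) (k : ℕ → ℕ) :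
    (l.map fun x => (f x : WithOne S)).prod * ∏ x ∈ s, (f x : WithOne S) ^ (d * k x)
      = (l.map fun x => (f x : WithOne S)).prod := by
  have one (x n : ℕ) : (l.map fun x => (f x : WithOne S)).prod * (f x : WithOne S) ^ (d * n)
      = (l.map fun x => (f x : WithOne S)).prod := by
    induction n with
    | zero => simp
    | succ n ih =>
      rw [Nat.mul_succ, pow_add, ← mul_assoc, ih, mul_comm, pow_mul_prod hh hd H f (f x) l hl]
  induction s using Finset.induction_on with
  | empty => simp
  | insert x s hx ih => rw [Finset.prod_insert hx, ← mul_assoc, one, ih]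

theorem prod_eq_of_modEq {h d : ℕ} (hh : 0 < h) (hd : 0 < d) {S : Type*} [CommSemigroup S]
    (H : SatisfiesId S (phiLHS h d) (phiRHS h)) (f : ℕ → S) (l l' : List ℕ)
    (hl : h ≤ l.length) (hl' : h ≤ l'.length)
    (hmod : ∀ x, l.count x ≡ l'.count x [MOD d]) :
    (l.map fun x => (f x : WithOne S)).prod = (l'.map fun x => (f x : WithOne S)).prod := by
  have expand (m : List ℕ) (hm : m.toFinset ⊆ l.toFinset ∪ l'.toFinset) :
      (m.map fun x => (f x : WithOne S)).prod
        = ∏ x ∈ l.toFinset ∪ l'.toFinset, (f x : WithOne S) ^ m.count x := by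
    rw [Finset.prod_list_map_count]
    refine Finset.prod_subset hm fun x _ hx => ?_
    rw [List.count_eq_zero_of_not_mem (by simpa using hx), pow_zero]
  -- With truncated subtraction, at most one of the two exponents added to a letter is nonzero.
  rw [← prod_mul_prod_pow hh hd H f l hl (l.toFinset ∪ l'.toFinset)
      (fun x => (l'.count x - l.count x) / d),
    ← prod_mul_prod_pow hh hd H f l' hl' (l.toFinset ∪ l'.toFinset)
      (fun x => (l.count x - l'.count x) / d),
    expand l Finset.subset_union_left, expand l' Finset.subset_union_right,
    ← Finset.prod_mul_distrib, ← Finset.prod_mul_distrib]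
  refine Finset.prod_congr rfl fun x _ => ?_
  rw [← pow_add, ← pow_add]
  congr 1
  rcases le_total (l.count x) (l'.count x) with hle | hle
  · rw [Nat.mul_div_cancel' ((Nat.modEq_iff_dvd' hle).1 (hmod x)), Nat.sub_eq_zero_of_le hle]
    simp; omega
  · rw [Nat.mul_div_cancel' ((Nat.modEq_iff_dvd' hle).1 (hmod x).symm), Nat.sub_eq_zero_of_le hle]
    simp; omega

/-- For `h ≤ d + 2`, the commutative law together with `Φ_{h,d}` is an identity basis for
the finite cyclic semigroup `C_{h,d}`: both identities hold in `C_{h,d}`, and every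
identity of `C_{h,d}` holds in every semigroup satisfying both. -/
theorem identity_basis_small_index (h d : ℕ) [Fact (0 < h)] [Fact (0 < d)]
    (hhd : h ≤ d + 2) :
    (SatisfiesId (Cyc h d) commLHS commRHS ∧
      SatisfiesId (Cyc h d) (phiLHS h d) (phiRHS h)) ∧
    (∀ u v : Word, SatisfiesId (Cyc h d) u v →
      ∀ (S : Type u) [Semigroup S], SatisfiesId S commLHS commRHS →
        SatisfiesId S (phiLHS h d) (phiRHS h) → SatisfiesId S u v) := by
  have hh : 0 < h := Fact.out
  have hd : 0 < d := Fact.out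
  refine ⟨⟨cyc_satisfies_comm, cyc_satisfies_phi⟩, ?_⟩
  intro u v H S _ hcomm hphi f
  let _ : CommSemigroup S :=
    { ‹Semigroup S› with
      mul_comm := fun a b => by
        simpa [commLHS, commRHS, FreeSemigroup.lift] using hcomm fun i => if i = 0 then a else b }
  apply WithOne.coe_injective
  refine (coe_lift f u).trans (Eq.trans ?_ (coe_lift f v).symm)
  by_cases hu : u.toList.length < h
  · exact ((cyc_perm_of_short hhd H hu).map _).prod_eq
  · have hv : ¬ v.toList.length < h := fun hv =>
      hu (cycReduce_eq_of_lt hv (cyc_length H).symm ▸ hv)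
    exact prod_eq_of_modEq hh hd hphi f _ _ (not_lt.1 hu) (not_lt.1 hv) (cyc_count_modEq H)
end
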